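/- Let r ≤ d and let U ∈ St(d, r). Then there exist vectors u^(1), …, u^(r) ∈ ℝ^d with ‖u^(i)‖₂ = 1 and u^(i)_α = 0 for all α = 1, …, i−1, and signs s_1, …, s_r ∈ {−1, 1}, such that U = H^(1) H^(2) ⋯ H^(r) I_{d×r} S, where H^(i) = I_d − 2 u^(i) u^(i)ᵀ is the Householder reflector associated with u^(i), I_{d×r} is the truncated identity matrix (the first r columns of I_d), and S = diag(s_1, …, s_r). That is, every orthonormal d × r frame is realized by the Householder parameterization up to column signs. -/

import Mathlib

/-!
Householder QR, specialised to orthonormal frames. A unit vector `v` whose first `k` coordinates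
vanish is sent to `± e_k` by a reflector whose vector also vanishes on those coordinates
(`exists_reflector`): take the normalised `v - e_k`, or `e_k` itself when `v = e_k`, which is the
case where the sign `-1` appears. Such a reflector fixes `e_j` for `j < k`.

If the first `k` columns of an orthonormal frame `V` are already `± e_j`, then orthogonality forces
column `k` to vanish on the first `k` coordinates, so one reflector `H` brings `H V` to the same
form with `k + 1` columns. Since `H` is an involution, `V = H (H V)`, and induction on the number
of remaining columns (`exists_reflectors`) gives the factorisation.
-/

open Matrix

/-- The truncated identity matrix `I_{d×r}` (the first `r` columns of `I_d`). -/
def truncId (d r : ℕ) : Matrix (Fin d) (Fin r) ℝ :=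
  Matrix.of fun i j => if (i : ℕ) = (j : ℕ) then (1 : ℝ) else 0

/-- The Householder reflector `H = I_d − 2 u uᵀ` of a vector `u ∈ ℝ^d`. -/
def householder {d : ℕ} (u : Fin d → ℝ) : Matrix (Fin d) (Fin d) ℝ :=
  1 - (2 : ℝ) • Matrix.vecMulVec u u

lemma householder_mulVec {d : ℕ} (u v : Fin d → ℝ) :
    householder u *ᵥ v = v - (2 * (u ⬝ᵥ v)) • u := by
  ext α
  simp [householder, Matrix.sub_mulVec, Matrix.smul_mulVec, Matrix.vecMulVec_mulVec]
  ring

lemma householder_transpose {d : ℕ} (u : Fin d → ℝ) : (householder u)ᵀ = householder u := by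
  simp [householder, Matrix.transpose_sub, Matrix.transpose_smul, Matrix.transpose_vecMulVec]

lemma householder_mul_self {d : ℕ} (u : Fin d → ℝ) (hu : u ⬝ᵥ u = 1) :
    householder u * householder u = 1 := by
  apply Matrix.ext_of_mulVec_single
  intro i
  rw [← Matrix.mulVec_mulVec, Matrix.one_mulVec, householder_mulVec, householder_mulVec]
  ext α
  simp only [dotProduct_sub, dotProduct_smul, hu, Pi.sub_apply, Pi.smul_apply, smul_eq_mul]
  ring

lemma exists_reflector {d : ℕ} (k : Fin d) (v : Fin d → ℝ) (hv : v ⬝ᵥ v = 1)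
    (hv0 : ∀ α : Fin d, α < k → v α = 0) :
    ∃ (u : Fin d → ℝ) (σ : ℝ), u ⬝ᵥ u = 1 ∧ (∀ α : Fin d, α < k → u α = 0) ∧
      (σ = 1 ∨ σ = -1) ∧ householder u *ᵥ v = Pi.single k σ := by
  by_cases h : v = Pi.single k 1
  · subst h
    refine ⟨Pi.single k 1, -1, hv, hv0, Or.inr rfl, ?_⟩
    rw [householder_mulVec, hv]
    ext α
    by_cases hα : α = k
    · subst hα; norm_num
    · simp [hα]
  · set w : Fin d → ℝ := v - Pi.single k 1 with hw
    have hwne : w ⬝ᵥ w ≠ 0 := fun h0 => h (sub_eq_zero.mp (dotProduct_self_eq_zero.mp h0))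
    have hwnn : 0 ≤ w ⬝ᵥ w := Finset.sum_nonneg fun i _ => mul_self_nonneg (w i)
    -- `v` and `e_k` have equal length, so `v` projects onto half of their difference.
    have hwv : 2 * (w ⬝ᵥ v) = w ⬝ᵥ w := by
      have h1 : w ⬝ᵥ v = 1 - v k := by simp [hw, sub_dotProduct, hv]
      have h2 : w ⬝ᵥ w = 2 - 2 * v k := by
        simp [hw, sub_dotProduct, dotProduct_sub, hv]; ring
      rw [h1, h2]; ring
    set c := (Real.sqrt (w ⬝ᵥ w))⁻¹ with hc
    have hcc : c * c * (w ⬝ᵥ w) = 1 := by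
      rw [hc, ← mul_inv, Real.mul_self_sqrt hwnn, inv_mul_cancel₀ hwne]
    refine ⟨c • w, 1, ?_, ?_, Or.inl rfl, ?_⟩
    · rw [smul_dotProduct, dotProduct_smul, smul_eq_mul, smul_eq_mul, ← hcc]; ring
    · intro α hα
      simp [hw, hv0 α hα, hα.ne]
    · rw [householder_mulVec, smul_dotProduct, smul_smul, smul_eq_mul]
      have : 2 * (c * (w ⬝ᵥ v)) * c = 1 := by rw [← hcc, ← hwv]; ring
      rw [this, one_smul, hw, sub_sub_cancel]

/-- The reduction with `m` columns still to be treated: the first `k = r - m` columns of `V` are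
already signed standard basis vectors. -/
lemma exists_reflectors {d r : ℕ} (hr : r ≤ d) (m : ℕ) : ∀ (k : ℕ), k + m = r →
    ∀ V : Matrix (Fin d) (Fin r) ℝ, Vᵀ * V = 1 →
    (∀ j : Fin r, (j : ℕ) < k → ∃ σ : ℝ, (σ = 1 ∨ σ = -1) ∧
      V.col j = Pi.single (Fin.castLE hr j) σ) →
    ∃ (u : Fin m → Fin d → ℝ) (s : Fin r → ℝ),
      (∀ i, u i ⬝ᵥ u i = 1) ∧
      (∀ (i : Fin m) (α : Fin d), (α : ℕ) < k + i → u i α = 0) ∧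
      (∀ i, s i = 1 ∨ s i = -1) ∧
      V = (List.ofFn fun i => householder (u i)).prod * truncId d r * Matrix.diagonal s := by
  induction m with
  | zero =>
    intro k hk V _ hcol
    choose s hs hV using fun j : Fin r => hcol j (by omega)
    refine ⟨fun i => i.elim0, s, fun i => i.elim0, fun i => i.elim0, hs, ?_⟩
    ext α j
    have := congrFun (hV j) α
    simp only [Matrix.col_apply, Pi.single_apply, Fin.ext_iff, Fin.val_castLE] at this
    simp [this, truncId, Matrix.mul_diagonal]
  | succ m ih =>
    intro k hk V hV hcol
    have hdot : ∀ i j, V.col i ⬝ᵥ V.col j = (1 : Matrix (Fin r) (Fin r) ℝ) i j := by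
      intro i j; rw [← hV]; rfl
    let kr : Fin r := ⟨k, by omega⟩
    -- Column `k` is orthogonal to `± e_j` for every `j < k`.
    have hv0 : ∀ α : Fin d, α < Fin.castLE hr kr → V.col kr α = 0 := by
      intro α hα
      have hαk : (α : ℕ) < k := hα
      let j : Fin r := ⟨α, by omega⟩
      obtain ⟨σ, hσ, hj⟩ := hcol j hαk
      have h := hdot j kr
      have hne : j ≠ kr := fun h => by simp [j, kr, Fin.ext_iff] at h; omega
      rw [hj, single_dotProduct, Matrix.one_apply_ne hne] at h
      have hσ0 : σ ≠ 0 := by rcases hσ with rfl | rfl <;> norm_num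
      exact (mul_eq_zero.mp h).resolve_left hσ0
    obtain ⟨u₀, σ, hu₀, hz, hσ, hH⟩ := exists_reflector (Fin.castLE hr kr) (V.col kr)
      ((hdot kr kr).trans (Matrix.one_apply_eq _)) hv0
    have hHH := householder_mul_self u₀ hu₀
    obtain ⟨u, s, hu, huz, hs, hfac⟩ := ih (k + 1) (by omega) (householder u₀ * V)
      (by rw [Matrix.transpose_mul, householder_transpose, Matrix.mul_assoc,
            ← Matrix.mul_assoc (householder u₀), hHH, Matrix.one_mul, hV])
      (by
        intro j hj
        have hcolmul : (householder u₀ * V).col j = householder u₀ *ᵥ V.col j := rfl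
        rw [hcolmul]
        rcases Nat.lt_succ_iff_lt_or_eq.mp hj with hlt | heq
        · obtain ⟨τ, hτ, hjτ⟩ := hcol j hlt
          refine ⟨τ, hτ, ?_⟩
          have : u₀ (Fin.castLE hr j) = 0 := hz _ hlt
          rw [hjτ, householder_mulVec, dotProduct_single, this]
          simp
        · obtain rfl : j = kr := Fin.ext heq
          exact ⟨σ, hσ, hH⟩)
    refine ⟨Fin.cons u₀ u, s, ?_, ?_, hs, ?_⟩
    · exact Fin.cases hu₀ hu
    · refine Fin.cases (fun α hα => hz α (show (α : ℕ) < k by simpa using hα)) (fun i α hα => ?_)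
      exact huz i α (by simp at hα; omega)
    · rw [List.ofFn_succ, List.prod_cons]
      simp only [Fin.cons_zero, Fin.cons_succ, Matrix.mul_assoc] at hfac ⊢
      rw [← hfac, ← Matrix.mul_assoc, hHH, Matrix.one_mul]

/-- every orthonormal frame `U ∈ St(d, r)` (with `r ≤ d`) is realized by the
Householder parameterization up to column signs: `U = H^(1) ⋯ H^(r) I_{d×r} S`, where the
reflector vectors `u^(i)` are unit (Euclidean norm 1), vanish on coordinates `α < i`, and
`S = diag(s_1, …, s_r)` with `s_i ∈ {−1, 1}`. -/
theorem stmt8 (d r : ℕ) (hr : r ≤ d)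
    (U : Matrix (Fin d) (Fin r) ℝ) (hU : Uᵀ * U = 1) :
    ∃ (u : Fin r → Fin d → ℝ) (s : Fin r → ℝ),
      (∀ i : Fin r, ∑ α : Fin d, u i α ^ 2 = 1) ∧
      (∀ (i : Fin r) (α : Fin d), (α : ℕ) < (i : ℕ) → u i α = 0) ∧
      (∀ i : Fin r, s i = 1 ∨ s i = -1) ∧
      U = (List.ofFn fun i : Fin r => householder (u i)).prod * truncId d r *
            Matrix.diagonal s := by
  obtain ⟨u, s, hu, hz, hs, h⟩ := exists_reflectors hr r 0 (Nat.zero_add r) U hU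
    (fun j hj => absurd hj (Nat.not_lt_zero _))
  refine ⟨u, s, fun i => ?_, fun i α hα => hz i α (by omega), hs, h⟩
  simpa only [dotProduct, sq] using hu i
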